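/- There exists a universal constant β > 0 such that for all integers n ≥ 1, k ≥ n and all reals C satisfying C ≥ 4 and C·k ≤ 16·n², the following holds: for every matrix Q ∈ ℝ^{k×n²} with orthonormal rows, if u, v ∈ ℝⁿ are independent standard Gaussian random vectors, then Pr[‖Q(u⊗v)‖² ≥ C·k] ≤ exp(−β·C·k/n). -/

import Mathlib

/-!
For fixed `u` the map `v ↦ Q (u ⊗ v)` is linear. Since `Q` is a contraction, its squared operator
norm is at most `‖u‖²`, while its squared Frobenius norm is itself a quadratic form `‖B u‖²`, where
`B` is a rearrangement of `Q` with the same Frobenius norm and squared operator norm at most `n`.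

By rotation invariance `‖A x‖²` is distributed as `∑ dᵢ yᵢ²`, with `dᵢ` the eigenvalues of `AᵀA`,
so `E exp (t ‖A x‖²) ≤ exp (3/2 t ‖A‖_F²)` as long as `t ‖A‖² ≤ 1/6`. With `t = 1/(12n)` this is
used over `v` on the event `‖u‖² < 2n`, and then over `u`, which gives
`E [exp (t ‖Q (u ⊗ v)‖²); ‖u‖² < 2n] ≤ exp (9/4 t ‖Q‖_F²)` and hence a Chernoff bound; for the
identity matrix it gives `Pr[‖u‖² ≥ 2n] ≤ exp (-n/12)`. Both are at most `e²` with
`e = exp (-a/(384n))`, where `a` is the threshold. If `e ≤ 1/2` then `2e² ≤ e`; otherwise Markov's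
inequality, with `E ‖Q (u ⊗ v)‖² = ‖Q‖_F² ≤ a/4`, already bounds the probability by `1/4 < e`.
-/

open MeasureTheory ProbabilityTheory Matrix
open scoped ENNReal Classical

noncomputable section

/-- Squared Euclidean norm of a finitely-indexed real vector. -/
def sqNorm {ι : Type*} [Fintype ι] (x : ι → ℝ) : ℝ := ∑ i, x i ^ 2

/-- Squared Frobenius norm of a real matrix. -/
def frobSq {m n : Type*} [Fintype m] [Fintype n] (A : Matrix m n ℝ) : ℝ :=
  ∑ i, ∑ j, A i j ^ 2

/-- Spectral (ℓ₂ operator) norm of a real matrix. -/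
def specNorm {m n : Type*} [Fintype m] [Fintype n] (A : Matrix m n ℝ) : ℝ :=
  sSup ((fun x : n → ℝ => Real.sqrt (sqNorm (A.mulVec x))) '' {x | sqNorm x ≤ 1})

/-- `i`-th largest singular value (1-based), characterized via
`σ_i(A) = min {‖A − X‖ : rank X ≤ i − 1}`. -/
def singVal {m n : Type*} [Fintype m] [Fintype n] (A : Matrix m n ℝ) (i : ℕ) : ℝ :=
  sInf {c | ∃ X : Matrix m n ℝ, X.rank ≤ i - 1 ∧ c = specNorm (A - X)}

/-- Flattening of an `n × n` matrix into a vector in `ℝ^{n²}`. -/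
def vec (n : ℕ) (A : Matrix (Fin n) (Fin n) ℝ) : Fin (n * n) → ℝ :=
  fun i => A (finProdFinEquiv.symm i).1 (finProdFinEquiv.symm i).2

/-- `u ⊗ v = vec (u vᵀ) ∈ ℝ^{n²}`. -/
def tensor {n : ℕ} (u v : Fin n → ℝ) : Fin (n * n) → ℝ :=
  vec n (Matrix.of fun i j => u i * v j)

/-- Standard Gaussian measure on `ι → ℝ`. -/
def stdGaussian (ι : Type*) [Fintype ι] : Measure (ι → ℝ) :=
  Measure.pi fun _ => gaussianReal 0 1

/-- Standard Gaussian measure on `n × n` matrices (as `Fin n → Fin n → ℝ`). -/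
def stdGaussianMat (n : ℕ) : Measure (Fin n → Fin n → ℝ) :=
  Measure.pi fun _ => stdGaussian (Fin n)

/-- Query maps of a deterministic `t`-round adaptive algorithm making `k` linear
measurements per round on inputs in `ℝ^N`. -/
def QueryMaps (N k t : ℕ) : Type :=
  (j : Fin t) → (Fin (j : ℕ) → (Fin k → ℝ)) → Matrix (Fin k) (Fin N) ℝ

namespace QueryMaps

variable {N k t : ℕ}

/-- Restriction of a round-`j` history to the first `i` rounds. -/
def prefixHist {j : Fin t} (h : Fin (j : ℕ) → Fin k → ℝ) {i : Fin t}
    (hij : (i : ℕ) < (j : ℕ)) : Fin (i : ℕ) → Fin k → ℝ :=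
  fun l => h ⟨l.1, l.isLt.trans hij⟩

/-- Validity of query maps: measurability, orthonormal rows within each round, and
orthogonality across rounds along consistent histories. -/
def Valid (Q : QueryMaps N k t) : Prop :=
  (∀ (j : Fin t) (i : Fin k) (l : Fin N), Measurable fun h => Q j h i l) ∧
  (∀ (j : Fin t) (h : Fin (j : ℕ) → Fin k → ℝ), Q j h * (Q j h)ᵀ = 1) ∧
  (∀ (j i : Fin t) (hij : (i : ℕ) < (j : ℕ)) (h : Fin (j : ℕ) → Fin k → ℝ),
      Q j h * (Q i (prefixHist h hij))ᵀ = 0)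

/-- Responses of the algorithm under exact linear measurements of `a`. -/
def resp (Q : QueryMaps N k t) (a : Fin N → ℝ) (j : Fin t) : Fin k → ℝ :=
  (Q j fun i => resp Q a ⟨i.1, i.isLt.trans j.isLt⟩).mulVec a
termination_by (j : ℕ)
decreasing_by exact i.isLt

/-- Responses of the algorithm under noisy linear measurements of `a`, with fresh
per-round noise `g`. -/
def nresp (Q : QueryMaps N k t) (a : Fin N → ℝ) (g : Fin t → Fin k → ℝ) (j : Fin t) :
    Fin k → ℝ :=
  ((Q j fun i => nresp Q a g ⟨i.1, i.isLt.trans j.isLt⟩).mulVec a) + g j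
termination_by (j : ℕ)
decreasing_by exact i.isLt

/-- The `tk × N` matrix stacking all the query matrices realized along the run of the
algorithm on input `a` (exact measurements). -/
def runMat (Q : QueryMaps N k t) (a : Fin N → ℝ) : Matrix (Fin t × Fin k) (Fin N) ℝ :=
  Matrix.of fun p l =>
    Q p.1 (fun i => resp Q a ⟨i.1, i.isLt.trans p.1.isLt⟩) p.2 l

end QueryMaps

/-- Kullback–Leibler divergence, valued in `[0, ∞]`, defined with the natural
logarithm. -/
def klDiv {Ω : Type*} [MeasurableSpace Ω] (P Q : Measure Ω) : ℝ≥0∞ :=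
  if P ≪ Q ∧ Integrable (fun x => Real.log ((P.rnDeriv Q x).toReal)) P then
    ENNReal.ofReal (∫ x, Real.log ((P.rnDeriv Q x).toReal) ∂P)
  else ⊤


/-- The rank-`r` plant `Σ_{i=1}^r uᵢ vᵢᵀ` built from the rows of `U` and `V`. -/
def plant {n r : ℕ} (U V : Fin r → Fin n → ℝ) : Matrix (Fin n) (Fin n) ℝ :=
  Matrix.of fun i j => ∑ l, U l i * V l j

/-- Schatten-`p` norm (real `p`), via the singular values. -/
def schattenNorm {n : ℕ} (p : ℝ) (A : Matrix (Fin n) (Fin n) ℝ) : ℝ :=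
  (∑ i ∈ Finset.range n, singVal A (i + 1) ^ p) ^ (1 / p)

/-- Ky-Fan `p` norm: sum of the `p` largest singular values. -/
def kyFanNorm {n : ℕ} (p : ℕ) (A : Matrix (Fin n) (Fin n) ℝ) : ℝ :=
  ∑ i ∈ Finset.range p, singVal A (i + 1)

/-! ### Squared norms of vectors and matrices -/

section SqNorm

variable {ι κ : Type*} [Fintype ι]

@[fun_prop]
lemma measurable_sqNorm : Measurable (sqNorm : (ι → ℝ) → ℝ) := by
  unfold sqNorm
  fun_prop

@[fun_prop]
lemma measurable_mulVec (A : Matrix κ ι ℝ) : Measurable fun x : ι → ℝ => A *ᵥ x := by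
  unfold mulVec dotProduct
  fun_prop

lemma sqNorm_nonneg (x : ι → ℝ) : 0 ≤ sqNorm x :=
  Finset.sum_nonneg fun _ _ => sq_nonneg _

lemma sqNorm_eq_dotProduct (x : ι → ℝ) : sqNorm x = x ⬝ᵥ x := by
  simp only [sqNorm, dotProduct, sq]

lemma sqNorm_ofLp (x : EuclideanSpace ℝ ι) : sqNorm x.ofLp = ‖x‖ ^ 2 :=
  (EuclideanSpace.real_norm_sq_eq x).symm

lemma sqNorm_single_one [DecidableEq ι] (i : ι) : sqNorm (Pi.single i 1 : ι → ℝ) = 1 := by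
  simp [sqNorm, Pi.single_apply]

lemma sqNorm_sub (x y : ι → ℝ) : sqNorm (x - y) = sqNorm x - 2 * (x ⬝ᵥ y) + sqNorm y := by
  simp only [sqNorm_eq_dotProduct, sub_dotProduct, dotProduct_sub, dotProduct_comm y x]
  ring

variable [Fintype κ]

lemma sqNorm_mulVec (A : Matrix κ ι ℝ) (x : ι → ℝ) :
    sqNorm (A *ᵥ x) = x ⬝ᵥ ((Aᴴ * A) *ᵥ x) := by
  rw [sqNorm_eq_dotProduct, conjTranspose_eq_transpose_of_trivial, ← mulVec_mulVec,
    dotProduct_mulVec x, vecMul_transpose]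

lemma frobSq_eq_trace_mul_transpose (A : Matrix κ ι ℝ) : frobSq A = trace (A * Aᵀ) := by
  simp [frobSq, trace, mul_apply, sq]

lemma frobSq_eq_trace_conjTranspose_mul (A : Matrix κ ι ℝ) : frobSq A = trace (Aᴴ * A) := by
  rw [frobSq_eq_trace_mul_transpose, conjTranspose_eq_transpose_of_trivial, trace_mul_comm]

variable [DecidableEq κ] {Q : Matrix κ ι ℝ}

lemma frobSq_eq_card_of_mul_transpose_eq_one (hQ : Q * Qᵀ = 1) : frobSq Q = Fintype.card κ := by
  rw [frobSq_eq_trace_mul_transpose, hQ, trace_one]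

/-- `‖y - QᵀQ y‖² = ‖y‖² - ‖Q y‖²`. -/
lemma sqNorm_mulVec_le_of_mul_transpose_eq_one (hQ : Q * Qᵀ = 1) (y : ι → ℝ) :
    sqNorm (Q *ᵥ y) ≤ sqNorm y := by
  have hnorm : sqNorm (Qᵀ *ᵥ (Q *ᵥ y)) = sqNorm (Q *ᵥ y) := by
    rw [sqNorm_mulVec Qᵀ, conjTranspose_eq_transpose_of_trivial, transpose_transpose, hQ,
      one_mulVec, sqNorm_eq_dotProduct]
  have hinner : y ⬝ᵥ (Qᵀ *ᵥ (Q *ᵥ y)) = sqNorm (Q *ᵥ y) := by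
    rw [mulVec_mulVec, sqNorm_mulVec, conjTranspose_eq_transpose_of_trivial]
  have hproj := sqNorm_nonneg (y - Qᵀ *ᵥ (Q *ᵥ y))
  rw [sqNorm_sub, hnorm, hinner] at hproj
  linarith

end SqNorm

/-! ### The spectrum of the Gram matrix -/

section Gram

variable {ι κ : Type*} [Fintype ι] [Fintype κ] (A : Matrix κ ι ℝ)

/-- The eigenvalues of `AᵀA`, i.e. the squared singular values of `A`, listed with multiplicity
along `gramEigenbasis A`. -/
def gramEigenvalues : ι → ℝ :=
  (isHermitian_conjTranspose_mul_self A).eigenvalues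

/-- An orthonormal basis of eigenvectors of `AᵀA`, i.e. of right singular vectors of `A`. -/
def gramEigenbasis : OrthonormalBasis ι ℝ (EuclideanSpace ℝ ι) :=
  (isHermitian_conjTranspose_mul_self A).eigenvectorBasis

lemma gram_mulVec_gramEigenbasis (i : ι) :
    (Aᴴ * A) *ᵥ (gramEigenbasis A i).ofLp = gramEigenvalues A i • (gramEigenbasis A i).ofLp :=
  (isHermitian_conjTranspose_mul_self A).mulVec_eigenvectorBasis i

lemma sum_gramEigenvalues : ∑ i, gramEigenvalues A i = frobSq A := by
  rw [frobSq_eq_trace_conjTranspose_mul,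
    (isHermitian_conjTranspose_mul_self A).trace_eq_sum_eigenvalues]
  rfl

lemma gramEigenvalues_nonneg (i : ι) : 0 ≤ gramEigenvalues A i :=
  (posSemidef_conjTranspose_mul_self A).eigenvalues_nonneg i

lemma sqNorm_mulVec_gramEigenbasis (i : ι) :
    sqNorm (A *ᵥ (gramEigenbasis A i).ofLp) = gramEigenvalues A i := by
  rw [sqNorm_mulVec, gram_mulVec_gramEigenbasis, dotProduct_smul, ← sqNorm_eq_dotProduct,
    sqNorm_ofLp, (gramEigenbasis A).norm_eq_one, one_pow, smul_eq_mul, mul_one]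

variable {A} in
lemma gramEigenvalues_le {L : ℝ} (hL : ∀ x, sqNorm (A *ᵥ x) ≤ L * sqNorm x) (i : ι) :
    gramEigenvalues A i ≤ L := by
  simpa only [sqNorm_mulVec_gramEigenbasis, sqNorm_ofLp, (gramEigenbasis A).norm_eq_one, one_pow,
    mul_one] using hL (gramEigenbasis A i).ofLp

lemma sqNorm_mulVec_sum_smul_gramEigenbasis (y : ι → ℝ) :
    sqNorm (A *ᵥ (∑ i, y i • gramEigenbasis A i).ofLp) = ∑ i, gramEigenvalues A i * y i ^ 2 := by
  have hgram : (Aᴴ * A) *ᵥ (∑ i, y i • gramEigenbasis A i).ofLp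
      = (∑ i, (y i * gramEigenvalues A i) • gramEigenbasis A i).ofLp := by
    simp only [WithLp.ofLp_sum, WithLp.ofLp_smul, mulVec_sum, mulVec_smul,
      gram_mulVec_gramEigenbasis, smul_smul]
  have hinner := (gramEigenbasis A).orthonormal.inner_sum
    (fun i => y i * gramEigenvalues A i) y Finset.univ
  rw [EuclideanSpace.inner_eq_star_dotProduct] at hinner
  rw [sqNorm_mulVec, hgram]
  refine Eq.trans hinner (Finset.sum_congr rfl fun i _ => ?_)
  rw [conj_trivial]
  ring

end Gram

/-! ### Quadratic forms in a standard Gaussian vector -/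

lemma lintegral_sq_gaussianReal : ∫⁻ y, ENNReal.ofReal (y ^ 2) ∂(gaussianReal 0 1) = 1 := by
  have hvar : ∫ y, y ^ 2 ∂(gaussianReal 0 1) = 1 := by
    rw [← variance_of_integral_eq_zero aemeasurable_id' integral_id_gaussianReal,
      variance_fun_id_gaussianReal, NNReal.coe_one]
  have hint : Integrable (fun y : ℝ => y ^ 2) (gaussianReal 0 1) :=
    (memLp_id_gaussianReal 2).integrable_sq
  rw [← ofReal_integral_eq_lintegral_ofReal hint (ae_of_all _ fun _ => sq_nonneg _), hvar,
    ENNReal.ofReal_one]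

lemma lintegral_exp_mul_sq_gaussianReal {s : ℝ} (hs : s < 1 / 2) :
    ∫⁻ y, ENNReal.ofReal (Real.exp (s * y ^ 2)) ∂(gaussianReal 0 1)
      = ENNReal.ofReal (√(1 - 2 * s)⁻¹) := by
  have hdensity (y : ℝ) : gaussianPDFReal 0 1 y * Real.exp (s * y ^ 2)
      = (√(2 * Real.pi))⁻¹ * Real.exp (-(1 / 2 - s) * y ^ 2) := by
    rw [gaussianPDFReal, mul_assoc, ← Real.exp_add]
    simp only [NNReal.coe_one, mul_one, sub_zero]
    ring_nf
  have hint : Integrable fun y : ℝ => (√(2 * Real.pi))⁻¹ * Real.exp (-(1 / 2 - s) * y ^ 2) :=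
    (integrable_exp_neg_mul_sq (by linarith)).const_mul _
  rw [gaussianReal_of_var_ne_zero _ one_ne_zero,
    lintegral_withDensity_eq_lintegral_mul _ (measurable_gaussianPDF 0 1) (by fun_prop)]
  simp only [Pi.mul_apply, gaussianPDF, ← ENNReal.ofReal_mul (gaussianPDFReal_nonneg _ _ _),
    hdensity]
  rw [← ofReal_integral_eq_lintegral_ofReal hint (ae_of_all _ fun _ => by positivity),
    integral_const_mul, integral_gaussian, ← Real.sqrt_inv, ← Real.sqrt_mul (by positivity)]
  congr 2
  have : 1 - 2 * s ≠ 0 := by linarith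
  field_simp

lemma sqrt_inv_one_sub_two_mul_le_exp {s : ℝ} (hs0 : 0 ≤ s) (hs : s ≤ 1 / 6) :
    √(1 - 2 * s)⁻¹ ≤ Real.exp (3 / 2 * s) := by
  rw [Real.sqrt_le_left (Real.exp_pos _).le, ← Real.exp_nat_mul]
  calc (1 - 2 * s)⁻¹ ≤ 3 * s + 1 := by
        rw [inv_le_iff_one_le_mul₀ (by linarith)]
        nlinarith
    _ ≤ Real.exp (3 * s) := Real.add_one_le_exp _
    _ = Real.exp ((2 : ℕ) * (3 / 2 * s)) := by
        congr 1
        push_cast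
        ring

section StdGaussian

variable {ι κ : Type*} [Fintype ι] [Fintype κ]

instance isProbabilityMeasure_stdGaussian_pi : IsProbabilityMeasure (stdGaussian ι) :=
  inferInstanceAs (IsProbabilityMeasure (Measure.pi fun _ : ι => gaussianReal 0 1))

lemma measurePreserving_eval_stdGaussian (i : ι) :
    MeasurePreserving (fun x : ι → ℝ => x i) (stdGaussian ι) (gaussianReal 0 1) :=
  measurePreserving_eval (fun _ => gaussianReal 0 1) i

lemma measurePreserving_sum_smul_orthonormalBasis
    (b : OrthonormalBasis κ ℝ (EuclideanSpace ℝ ι)) :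
    MeasurePreserving (fun y : κ → ℝ => (∑ i, y i • b i).ofLp) (stdGaussian κ) (stdGaussian ι) := by
  refine ⟨by fun_prop, ?_⟩
  have hlaw := (stdGaussian_eq_map_pi_orthonormalBasis b).symm.trans map_pi_eq_stdGaussian.symm
  have hofLp := congrArg (Measure.map (WithLp.ofLp : EuclideanSpace ℝ ι → ι → ℝ)) hlaw
  rw [Measure.map_map (by fun_prop) (by fun_prop), Measure.map_map (by fun_prop) (by fun_prop)]
    at hofLp
  exact hofLp.trans Measure.map_id

lemma lintegral_comp_sqNorm_mulVec (A : Matrix κ ι ℝ) {f : ℝ → ℝ≥0∞} (hf : Measurable f) :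
    ∫⁻ x, f (sqNorm (A *ᵥ x)) ∂(stdGaussian ι)
      = ∫⁻ y, f (∑ i, gramEigenvalues A i * y i ^ 2) ∂(stdGaussian ι) := by
  rw [← (measurePreserving_sum_smul_orthonormalBasis (gramEigenbasis A)).lintegral_comp
    (by fun_prop)]
  simp only [sqNorm_mulVec_sum_smul_gramEigenbasis]

lemma lintegral_prod_eval_stdGaussian {f : ι → ℝ → ℝ≥0∞} (hf : ∀ i, Measurable (f i)) :
    ∫⁻ x, ∏ i, f i (x i) ∂(stdGaussian ι) = ∏ i, ∫⁻ z, f i z ∂(gaussianReal 0 1) := by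
  have hindep : iIndepFun (fun i (x : ι → ℝ) => f i (x i)) (stdGaussian ι) :=
    iIndepFun_pi fun i => (hf i).aemeasurable
  rw [lintegral_prod_eq_prod_lintegral_of_indepFun _ _ hindep fun i => by fun_prop]
  exact Finset.prod_congr rfl fun i _ =>
    (measurePreserving_eval_stdGaussian i).lintegral_comp (hf i)

lemma lintegral_sqNorm_mulVec (A : Matrix κ ι ℝ) :
    ∫⁻ x, ENNReal.ofReal (sqNorm (A *ᵥ x)) ∂(stdGaussian ι) = ENNReal.ofReal (frobSq A) := by
  have hsum (y : ι → ℝ) : ENNReal.ofReal (∑ i, gramEigenvalues A i * y i ^ 2)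
      = ∑ i, ENNReal.ofReal (gramEigenvalues A i) * ENNReal.ofReal (y i ^ 2) := by
    rw [ENNReal.ofReal_sum_of_nonneg fun i _ =>
      mul_nonneg (gramEigenvalues_nonneg A i) (sq_nonneg _)]
    exact Finset.sum_congr rfl fun i _ => ENNReal.ofReal_mul (gramEigenvalues_nonneg A i)
  have hmoment (i : ι) : ∫⁻ y, ENNReal.ofReal (y i ^ 2) ∂(stdGaussian ι) = 1 :=
    ((measurePreserving_eval_stdGaussian i).lintegral_comp
      (f := fun z => ENNReal.ofReal (z ^ 2)) (by fun_prop)).trans lintegral_sq_gaussianReal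
  rw [lintegral_comp_sqNorm_mulVec A ENNReal.measurable_ofReal, lintegral_congr hsum,
    lintegral_finsetSum _ fun i _ => by fun_prop, ← sum_gramEigenvalues,
    ENNReal.ofReal_sum_of_nonneg fun i _ => gramEigenvalues_nonneg A i]
  refine Finset.sum_congr rfl fun i _ => ?_
  rw [lintegral_const_mul _ (by fun_prop), hmoment, mul_one]

lemma lintegral_exp_sqNorm_mulVec_le {A : Matrix κ ι ℝ} {L t : ℝ}
    (hL : ∀ x, sqNorm (A *ᵥ x) ≤ L * sqNorm x) (ht : 0 ≤ t) (htL : t * L ≤ 1 / 6) :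
    ∫⁻ x, ENNReal.ofReal (Real.exp (t * sqNorm (A *ᵥ x))) ∂(stdGaussian ι)
      ≤ ENNReal.ofReal (Real.exp (3 / 2 * t * frobSq A)) := by
  set d := gramEigenvalues A
  have hprod (y : ι → ℝ) : ENNReal.ofReal (Real.exp (t * ∑ i, d i * y i ^ 2))
      = ∏ i, ENNReal.ofReal (Real.exp (t * d i * y i ^ 2)) := by
    rw [← ENNReal.ofReal_prod_of_nonneg fun _ _ => (Real.exp_pos _).le, ← Real.exp_sum,
      Finset.mul_sum]
    simp only [mul_assoc]
  have hfactor (i : ι) : ∫⁻ z, ENNReal.ofReal (Real.exp (t * d i * z ^ 2)) ∂(gaussianReal 0 1)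
      ≤ ENNReal.ofReal (Real.exp (3 / 2 * (t * d i))) := by
    have hnonneg : 0 ≤ t * d i := mul_nonneg ht (gramEigenvalues_nonneg A i)
    have hle : t * d i ≤ 1 / 6 := (mul_le_mul_of_nonneg_left (gramEigenvalues_le hL i) ht).trans htL
    rw [lintegral_exp_mul_sq_gaussianReal (by linarith)]
    exact ENNReal.ofReal_le_ofReal (sqrt_inv_one_sub_two_mul_le_exp hnonneg hle)
  calc ∫⁻ x, ENNReal.ofReal (Real.exp (t * sqNorm (A *ᵥ x))) ∂(stdGaussian ι)
      = ∏ i, ∫⁻ z, ENNReal.ofReal (Real.exp (t * d i * z ^ 2)) ∂(gaussianReal 0 1) := by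
        rw [lintegral_comp_sqNorm_mulVec A (f := fun r => ENNReal.ofReal (Real.exp (t * r)))
          (by fun_prop), lintegral_congr hprod, lintegral_prod_eval_stdGaussian
          (f := fun i z => ENNReal.ofReal (Real.exp (t * d i * z ^ 2))) fun i => by fun_prop]
    _ ≤ ∏ i, ENNReal.ofReal (Real.exp (3 / 2 * (t * d i))) :=
        Finset.prod_le_prod' fun i _ => hfactor i
    _ = ENNReal.ofReal (Real.exp (3 / 2 * t * frobSq A)) := by
        rw [← ENNReal.ofReal_prod_of_nonneg fun _ _ => (Real.exp_pos _).le, ← Real.exp_sum,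
          ← sum_gramEigenvalues, ← Finset.mul_sum, ← Finset.mul_sum, mul_assoc]

end StdGaussian

/-! ### Tail bounds for one Gaussian vector -/

lemma measure_ge_le_of_lintegral_exp_le {α : Type*} [MeasurableSpace α] {μ : Measure α} {g : α → ℝ}
    (hg : Measurable g) {t b : ℝ} (ht : 0 ≤ t)
    (hmoment : ∫⁻ x, ENNReal.ofReal (Real.exp (t * g x)) ∂μ ≤ ENNReal.ofReal (Real.exp b)) (a : ℝ) :
    μ {x | a ≤ g x} ≤ ENNReal.ofReal (Real.exp (b - t * a)) := by
  calc μ {x | a ≤ g x}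
      ≤ μ {x | ENNReal.ofReal (Real.exp (t * a)) ≤ ENNReal.ofReal (Real.exp (t * g x))} :=
        measure_mono fun x hx => ENNReal.ofReal_le_ofReal
          (Real.exp_le_exp.2 (mul_le_mul_of_nonneg_left hx ht))
    _ ≤ (∫⁻ x, ENNReal.ofReal (Real.exp (t * g x)) ∂μ) / ENNReal.ofReal (Real.exp (t * a)) :=
        meas_ge_le_lintegral_div (by fun_prop)
          (ENNReal.ofReal_pos.2 (Real.exp_pos _)).ne' ENNReal.ofReal_ne_top
    _ ≤ ENNReal.ofReal (Real.exp b) / ENNReal.ofReal (Real.exp (t * a)) := by gcongr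
    _ = ENNReal.ofReal (Real.exp (b - t * a)) := by
        rw [← ENNReal.ofReal_div_of_pos (Real.exp_pos _), Real.exp_sub]

lemma stdGaussian_two_mul_card_le_sqNorm (ι : Type*) [Fintype ι] :
    stdGaussian ι {u | 2 * (Fintype.card ι : ℝ) ≤ sqNorm u}
      ≤ ENNReal.ofReal (Real.exp (-(Fintype.card ι / 12))) := by
  have hmoment := lintegral_exp_sqNorm_mulVec_le (A := (1 : Matrix ι ι ℝ)) (L := 1) (t := 1 / 6)
    (by simp) (by norm_num) (by norm_num)
  simp only [one_mulVec, frobSq_eq_card_of_mul_transpose_eq_one (Q := (1 : Matrix ι ι ℝ)) (by simp)]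
    at hmoment
  refine (measure_ge_le_of_lintegral_exp_le measurable_sqNorm (by norm_num) hmoment _).trans_eq ?_
  congr 2
  ring

/-! ### Rank-one tensors -/

section Outer

variable {ι ι' κ : Type*}

/-- The outer product `u vᵀ` as a vector indexed by pairs: the tensor product `u ⊗ v` before its
index set is enumerated. -/
def outer (u : ι → ℝ) (v : ι' → ℝ) : ι × ι' → ℝ := fun p => u p.1 * v p.2

@[fun_prop]
lemma measurable_outer : Measurable fun p : (ι → ℝ) × (ι' → ℝ) => outer p.1 p.2 := by
  unfold outer
  fun_prop

/-- The rearrangement of `Q` that sends `u` to the flattening of `slice Q u`. -/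
def unfolding (Q : Matrix κ (ι × ι') ℝ) : Matrix (κ × ι') ι ℝ :=
  of fun p a => Q p.1 (a, p.2)

/-- The matrix of the linear map `v ↦ Q (u ⊗ v)` for fixed `u`. -/
def slice [Fintype ι] (Q : Matrix κ (ι × ι') ℝ) (u : ι → ℝ) : Matrix κ ι' ℝ :=
  of fun i j => (unfolding Q *ᵥ u) (i, j)

lemma mulVec_tensor {n : ℕ} (Q : Matrix κ (Fin (n * n)) ℝ) (u v : Fin n → ℝ) :
    Q *ᵥ tensor u v = Q.submatrix id finProdFinEquiv *ᵥ outer u v :=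
  (submatrix_mulVec_equiv Q (outer u v) id finProdFinEquiv).symm

variable [Fintype ι] [Fintype ι']

lemma sqNorm_outer (u : ι → ℝ) (v : ι' → ℝ) : sqNorm (outer u v) = sqNorm u * sqNorm v := by
  simp only [sqNorm, outer, Fintype.sum_prod_type, Finset.sum_mul_sum, mul_pow]

variable (Q : Matrix κ (ι × ι') ℝ)

lemma mulVec_outer (u : ι → ℝ) (v : ι' → ℝ) : Q *ᵥ outer u v = slice Q u *ᵥ v := by
  ext i
  simp only [mulVec, dotProduct, outer, slice, unfolding, of_apply, Fintype.sum_prod_type,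
    Finset.sum_mul, mul_assoc]
  exact Finset.sum_comm

variable [Fintype κ]

lemma frobSq_slice (u : ι → ℝ) : frobSq (slice Q u) = sqNorm (unfolding Q *ᵥ u) := by
  simp only [frobSq, sqNorm, slice, of_apply, Fintype.sum_prod_type]

lemma frobSq_unfolding : frobSq (unfolding Q) = frobSq Q := by
  simp only [frobSq, unfolding, of_apply, Fintype.sum_prod_type]
  exact Finset.sum_congr rfl fun _ _ => Finset.sum_comm

variable {Q} (hQ : ∀ y, sqNorm (Q *ᵥ y) ≤ sqNorm y)
include hQ

lemma sqNorm_slice_mulVec_le (u : ι → ℝ) (v : ι' → ℝ) :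
    sqNorm (slice Q u *ᵥ v) ≤ sqNorm u * sqNorm v := by
  rw [← mulVec_outer, ← sqNorm_outer]
  exact hQ _

/-- `‖slice Q u‖_F²` is the sum of the squared column norms `‖Q (u ⊗ eⱼ)‖² ≤ ‖u‖²`. -/
lemma sqNorm_unfolding_mulVec_le (u : ι → ℝ) :
    sqNorm (unfolding Q *ᵥ u) ≤ Fintype.card ι' * sqNorm u := by
  have hcol (j : ι') : ∑ i, slice Q u i j ^ 2 ≤ sqNorm u := by
    have h := sqNorm_slice_mulVec_le hQ u (Pi.single j 1)
    rwa [mulVec_single_one, sqNorm_single_one, mul_one] at h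
  calc sqNorm (unfolding Q *ᵥ u) = ∑ j, ∑ i, slice Q u i j ^ 2 := by
        rw [← frobSq_slice, frobSq, Finset.sum_comm]
    _ ≤ ∑ _j : ι', sqNorm u := Finset.sum_le_sum fun j _ => hcol j
    _ = Fintype.card ι' * sqNorm u := by rw [Finset.sum_const, Finset.card_univ, nsmul_eq_mul]

end Outer

/-! ### Tail bounds for rank-one tensors -/

section OuterGaussian

variable {ι ι' κ : Type*} [Fintype ι] [Fintype ι'] [Fintype κ] (Q : Matrix κ (ι × ι') ℝ)

lemma lintegral_sqNorm_mulVec_outer :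
    ∫⁻ p, ENNReal.ofReal (sqNorm (Q *ᵥ outer p.1 p.2)) ∂((stdGaussian ι).prod (stdGaussian ι'))
      = ENNReal.ofReal (frobSq Q) := by
  rw [lintegral_prod _ (by fun_prop)]
  simp only [mulVec_outer, lintegral_sqNorm_mulVec, frobSq_slice, frobSq_unfolding]

lemma measure_le_sqNorm_mulVec_outer_le_div {a : ℝ} (ha : 0 < a) :
    ((stdGaussian ι).prod (stdGaussian ι')) {p | a ≤ sqNorm (Q *ᵥ outer p.1 p.2)}
      ≤ ENNReal.ofReal (frobSq Q / a) := by
  rw [ENNReal.ofReal_div_of_pos ha, ← lintegral_sqNorm_mulVec_outer]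
  exact (measure_mono fun p hp => ENNReal.ofReal_le_ofReal hp).trans
    (meas_ge_le_lintegral_div (by fun_prop) (ENNReal.ofReal_pos.2 ha).ne' ENNReal.ofReal_ne_top)

variable {Q} (hQ : ∀ y, sqNorm (Q *ᵥ y) ≤ sqNorm y)
include hQ

lemma setLIntegral_exp_sqNorm_mulVec_outer_le {t r : ℝ} (ht : 0 ≤ t) (htr : t * r ≤ 1 / 6)
    (hcard : 3 / 2 * t * Fintype.card ι' ≤ 1 / 6) :
    ∫⁻ p in {u | sqNorm u < r} ×ˢ Set.univ, ENNReal.ofReal (Real.exp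
        (t * sqNorm (Q *ᵥ outer p.1 p.2))) ∂((stdGaussian ι).prod (stdGaussian ι'))
      ≤ ENNReal.ofReal (Real.exp (9 / 4 * t * frobSq Q)) := by
  have hinner (u : ι → ℝ) (hu : sqNorm u < r) :
      ∫⁻ v, ENNReal.ofReal (Real.exp (t * sqNorm (Q *ᵥ outer u v))) ∂(stdGaussian ι')
        ≤ ENNReal.ofReal (Real.exp (3 / 2 * t * sqNorm (unfolding Q *ᵥ u))) := by
    simp only [mulVec_outer, ← frobSq_slice]
    exact lintegral_exp_sqNorm_mulVec_le (sqNorm_slice_mulVec_le hQ u) ht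
      ((mul_le_mul_of_nonneg_left hu.le ht).trans htr)
  rw [setLIntegral_prod _ (by fun_prop)]
  simp only [Measure.restrict_univ]
  calc ∫⁻ u in {u | sqNorm u < r}, ∫⁻ v, ENNReal.ofReal (Real.exp
          (t * sqNorm (Q *ᵥ outer u v))) ∂(stdGaussian ι') ∂(stdGaussian ι)
      ≤ ∫⁻ u in {u | sqNorm u < r}, ENNReal.ofReal (Real.exp
          (3 / 2 * t * sqNorm (unfolding Q *ᵥ u))) ∂(stdGaussian ι) :=
        setLIntegral_mono (by fun_prop) hinner
    _ ≤ ∫⁻ u, ENNReal.ofReal (Real.exp (3 / 2 * t * sqNorm (unfolding Q *ᵥ u))) ∂(stdGaussian ι) :=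
        setLIntegral_le_lintegral _ _
    _ ≤ ENNReal.ofReal (Real.exp (3 / 2 * (3 / 2 * t) * frobSq (unfolding Q))) :=
        lintegral_exp_sqNorm_mulVec_le (sqNorm_unfolding_mulVec_le hQ) (by positivity) hcard
    _ = ENNReal.ofReal (Real.exp (9 / 4 * t * frobSq Q)) := by
        rw [frobSq_unfolding]
        ring_nf

lemma measure_le_sqNorm_mulVec_outer_le_exp_add_exp [Nonempty ι]
    (hcard : Fintype.card ι' ≤ Fintype.card ι) (a : ℝ) :
    ((stdGaussian ι).prod (stdGaussian ι')) {p | a ≤ sqNorm (Q *ᵥ outer p.1 p.2)}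
      ≤ ENNReal.ofReal (Real.exp (-(Fintype.card ι / 12))
          + Real.exp (-((a - 9 / 4 * frobSq Q) / (12 * Fintype.card ι)))) := by
  set n : ℝ := (Fintype.card ι : ℝ)
  set S : Set (ι → ℝ) := {u | sqNorm u < 2 * n}
  set μ := (stdGaussian ι).prod (stdGaussian ι')
  have hn : 0 < n := Nat.cast_pos.2 Fintype.card_pos
  have hcard' : (Fintype.card ι' : ℝ) ≤ n := Nat.cast_le.2 hcard
  have hS : MeasurableSet S := measurableSet_lt measurable_sqNorm measurable_const
  have hlarge : μ (S ×ˢ Set.univ)ᶜ ≤ ENNReal.ofReal (Real.exp (-(n / 12))) := by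
    have hcompl : (S ×ˢ Set.univ : Set ((ι → ℝ) × (ι' → ℝ)))ᶜ
        = {u | 2 * n ≤ sqNorm u} ×ˢ Set.univ := by
      ext p
      simp [S]
    rw [hcompl, Measure.prod_prod, measure_univ, mul_one]
    exact stdGaussian_two_mul_card_le_sqNorm ι
  have hsmall : μ.restrict (S ×ˢ Set.univ) {p | a ≤ sqNorm (Q *ᵥ outer p.1 p.2)}
      ≤ ENNReal.ofReal (Real.exp (9 / 4 * (1 / (12 * n)) * frobSq Q - 1 / (12 * n) * a)) := by
    refine measure_ge_le_of_lintegral_exp_le (by fun_prop) (by positivity)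
      (setLIntegral_exp_sqNorm_mulVec_outer_le hQ (by positivity) ?_ ?_) a
    · field_simp
      norm_num
    · field_simp
      linarith
  calc μ {p | a ≤ sqNorm (Q *ᵥ outer p.1 p.2)}
      ≤ μ.restrict (S ×ˢ Set.univ) {p | a ≤ sqNorm (Q *ᵥ outer p.1 p.2)}
          + μ (S ×ˢ Set.univ)ᶜ := by
        rw [Measure.restrict_apply' (hS.prod .univ)]
        exact (measure_le_inter_add_sdiff _ _ _).trans
          (add_le_add_right (measure_mono fun _ hp => hp.2) _)
    _ ≤ ENNReal.ofReal (Real.exp (9 / 4 * (1 / (12 * n)) * frobSq Q - 1 / (12 * n) * a))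
          + ENNReal.ofReal (Real.exp (-(n / 12))) := add_le_add hsmall hlarge
    _ = ENNReal.ofReal (Real.exp (-(n / 12))
          + Real.exp (-((a - 9 / 4 * frobSq Q) / (12 * n)))) := by
        rw [← ENNReal.ofReal_add (Real.exp_pos _).le (Real.exp_pos _).le, add_comm]
        congr 3
        field_simp
        ring

end OuterGaussian

theorem tensor_projection_tail_bound_general {ι ι' κ : Type*} [Fintype ι] [Nonempty ι] [Fintype ι']
    [Fintype κ] (hcard : Fintype.card ι' ≤ Fintype.card ι) {Q : Matrix κ (ι × ι') ℝ}
    (hQ : ∀ y, sqNorm (Q *ᵥ y) ≤ sqNorm y) {a : ℝ} (ha : 4 * frobSq Q ≤ a)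
    (ha' : a ≤ 16 * (Fintype.card ι : ℝ) ^ 2) :
    ((stdGaussian ι).prod (stdGaussian ι')) {p | a ≤ sqNorm (Q *ᵥ outer p.1 p.2)}
      ≤ ENNReal.ofReal (Real.exp (-(a / (384 * Fintype.card ι)))) := by
  rcases le_or_gt a 0 with ha0 | ha0
  · refine prob_le_one.trans (ENNReal.one_le_ofReal.2 (Real.one_le_exp ?_))
    exact neg_nonneg.2 (div_nonpos_of_nonpos_of_nonneg ha0 (by positivity))
  set n : ℝ := (Fintype.card ι : ℝ)
  have hn : 0 < n := Nat.cast_pos.2 Fintype.card_pos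
  set e := Real.exp (-(a / (384 * n)))
  have he : 0 < e := Real.exp_pos _
  have hee : e * e = Real.exp (-(a / (192 * n))) := by
    rw [← Real.exp_add]
    congr 1
    field_simp
    norm_num
  rcases le_or_gt e (1 / 2) with hle | hgt
  · have hlarge : Real.exp (-(n / 12)) ≤ e * e := by
      rw [hee, Real.exp_le_exp, neg_le_neg_iff, div_le_iff₀ (by positivity)]
      linarith
    have hsmall : Real.exp (-((a - 9 / 4 * frobSq Q) / (12 * n))) ≤ e * e := by
      rw [hee, Real.exp_le_exp, neg_le_neg_iff, div_le_div_iff₀ (by positivity) (by positivity)]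
      nlinarith
    refine (measure_le_sqNorm_mulVec_outer_le_exp_add_exp hQ hcard a).trans
      (ENNReal.ofReal_le_ofReal ?_)
    nlinarith
  · refine (measure_le_sqNorm_mulVec_outer_le_div Q ha0).trans (ENNReal.ofReal_le_ofReal ?_)
    rw [div_le_iff₀ ha0]
    nlinarith

/-- Tail bound for the projection of a random rank-one tensor onto a fixed
orthonormal query space (Lemma 3.2 of the paper). -/
theorem tensor_projection_tail_bound :
    ∃ β : ℝ, 0 < β ∧
      ∀ (n k : ℕ) (C : ℝ), 1 ≤ n → n ≤ k → 4 ≤ C → C * k ≤ 16 * (n : ℝ) ^ 2 →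
      ∀ Q : Matrix (Fin k) (Fin (n * n)) ℝ, Q * Qᵀ = 1 →
      ((stdGaussian (Fin n)).prod (stdGaussian (Fin n)))
          {p | C * k ≤ sqNorm (Q.mulVec (tensor p.1 p.2))}
        ≤ ENNReal.ofReal (Real.exp (-(β * C * k / n))) := by
  refine ⟨1 / 384, by norm_num, fun n k C hn _ hC hCk Q hQ => ?_⟩
  have : NeZero n := ⟨by lia⟩
  have hR : Q.submatrix id finProdFinEquiv * (Q.submatrix id finProdFinEquiv)ᵀ = 1 := by
    rw [transpose_submatrix, submatrix_mul_equiv, hQ, submatrix_id_id]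
  have hbound := tensor_projection_tail_bound_general (a := C * k) le_rfl
    (sqNorm_mulVec_le_of_mul_transpose_eq_one hR)
    (by rw [frobSq_eq_card_of_mul_transpose_eq_one hR, Fintype.card_fin]; gcongr)
    (by rwa [Fintype.card_fin])
  simp only [mulVec_tensor]
  convert hbound using 4
  rw [Fintype.card_fin]
  ring

end
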